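/- Let C be a small category. There is a model category structure on the category P(C, Grpd) of presheaves of groupoids on C (functors Cᵒᵖ → Grpd) in which: a map φ is a weak equivalence if φ(X) : F(X) → G(X) is an equivalence of groupoids for every X ∈ C; a map φ is a fibration if φ(X) is an isofibration of groupoids for every X ∈ C; and the cofibrations are the maps with the left lifting property with respect to all maps that are simultaneously weak equivalences and fibrations. -/

import Mathlib

open CategoryTheory

universe u

/-- `f` is a retract of `g` (in the arrow category). -/
def IsRetractOf {M : Type*} [Category M] {X Y Z W : M} (f : X ⟶ Y) (g : Z ⟶ W) : Prop :=
  ∃ (iX : X ⟶ Z) (rX : Z ⟶ X) (iY : Y ⟶ W) (rY : W ⟶ Y),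
    iX ≫ rX = 𝟙 X ∧ iY ≫ rY = 𝟙 Y ∧ iX ≫ g = f ≫ iY ∧ g ≫ rY = rX ≫ f

/-- A class of morphisms is stable under retracts. -/
def StableUnderRetracts {M : Type*} [Category M] (P : MorphismProperty M) : Prop :=
  ∀ ⦃X Y Z W : M⦄ (f : X ⟶ Y) (g : Z ⟶ W), IsRetractOf f g → P g → P f

/-- Quillen's axioms for a model structure with the given classes of
weak equivalences, fibrations and cofibrations (bicompleteness of the
underlying category being taken for granted). -/
structure IsModelStructure {M : Type*} [Category M]
    (W Fib Cof : MorphismProperty M) : Prop where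
  /-- two-out-of-three for weak equivalences -/
  comp_mem : ∀ ⦃X Y Z : M⦄ (f : X ⟶ Y) (g : Y ⟶ Z), W f → W g → W (f ≫ g)
  of_postcomp : ∀ ⦃X Y Z : M⦄ (f : X ⟶ Y) (g : Y ⟶ Z), W g → W (f ≫ g) → W f
  of_precomp : ∀ ⦃X Y Z : M⦄ (f : X ⟶ Y) (g : Y ⟶ Z), W f → W (f ≫ g) → W g
  /-- the three classes are closed under retracts -/
  weq_retract : StableUnderRetracts W
  fib_retract : StableUnderRetracts Fib
  cof_retract : StableUnderRetracts Cof
  /-- lifting axioms -/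
  lift_cof_trivFib : ∀ ⦃A B X Y : M⦄ (i : A ⟶ B) (p : X ⟶ Y),
    Cof i → Fib p → W p → HasLiftingProperty i p
  lift_trivCof_fib : ∀ ⦃A B X Y : M⦄ (i : A ⟶ B) (p : X ⟶ Y),
    Cof i → W i → Fib p → HasLiftingProperty i p
  /-- factorization axioms -/
  fact_cof_trivFib : ∀ ⦃X Y : M⦄ (f : X ⟶ Y),
    ∃ (Z : M) (i : X ⟶ Z) (p : Z ⟶ Y), Cof i ∧ Fib p ∧ W p ∧ i ≫ p = f
  fact_trivCof_fib : ∀ ⦃X Y : M⦄ (f : X ⟶ Y),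
    ∃ (Z : M) (i : X ⟶ Z) (p : Z ⟶ Y), Cof i ∧ W i ∧ Fib p ∧ i ≫ p = f

/-- A functor between groupoids is an isofibration if every isomorphism out of the
image of an object lifts. -/
def IsIsofibration {G H : Type*} [Groupoid G] [Groupoid H] (F : G ⥤ H) : Prop :=
  ∀ (a : G) (y : H) (g : F.obj a ≅ y),
    ∃ (b : G) (e : a ≅ b) (h : F.obj b = y), F.map e.hom = g.hom ≫ eqToHom h.symm

/-! The model structure comes from Quillen's path object argument, the path object of a groupoid
being its groupoid of arrows. A trivial fibration is a fully faithful functor that is surjective on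
objects, and a lift against a fully faithful map of presheaves is determined by its effect on
objects. Factoring a map into a cofibration and a trivial fibration therefore reduces to factoring
a map of presheaves of sets into a map with the left lifting property against epimorphisms and an
epimorphism, which is possible because presheaves of sets have enough projectives. -/

universe v w

open Limits
open MorphismProperty (HasFactorization epimorphisms factorizationData)

section PathObjects

variable {M : Type*} [Category M]

/-- A functorial path object: every `A` is a common retract, through the constant paths, of the
source and target projections of an object `path.obj A` depending functorially on `A`. The
structure maps are natural transformations between `path` and the identity, recorded by their
components. No homotopical condition is imposed here. -/
structure FunctorialPathObject (M : Type*) [Category M] where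
  path : M ⥤ M
  src (A : M) : path.obj A ⟶ A
  tgt (A : M) : path.obj A ⟶ A
  const (A : M) : A ⟶ path.obj A
  src_naturality {A B : M} (f : A ⟶ B) : path.map f ≫ src B = src A ≫ f
  tgt_naturality {A B : M} (f : A ⟶ B) : path.map f ≫ tgt B = tgt A ≫ f
  const_naturality {A B : M} (f : A ⟶ B) : f ≫ const B = const A ≫ path.map f
  const_src (A : M) : const A ≫ src A = 𝟙 A
  const_tgt (A : M) : const A ≫ tgt A = 𝟙 A

namespace FunctorialPathObject

variable (P : FunctorialPathObject M) {A B E X : M}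

section MappingPath

variable (f : A ⟶ B) [HasPullback f (P.src B)]

/-- The mapping path object of `f : A ⟶ B`: a point of `A` together with a path in `B` starting at
its image. -/
noncomputable abbrev mappingPath : M := pullback f (P.src B)

/-- The inclusion of `A` into the mapping path object of `f : A ⟶ B` by constant paths. -/
noncomputable def constPath : A ⟶ P.mappingPath f :=
  pullback.lift (𝟙 A) (f ≫ P.const B) (by rw [Category.assoc, P.const_src]; simp)

/-- The map sending a point of the mapping path object to the endpoint of its path. -/
noncomputable def endpoint : P.mappingPath f ⟶ B := pullback.snd f (P.src B) ≫ P.tgt B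

/-- The comparison map sending a path in `A` to its source and its image in `B`. -/
noncomputable def gap : P.path.obj A ⟶ P.mappingPath f :=
  pullback.lift (P.src A) (P.path.map f) (P.src_naturality f).symm

lemma constPath_fst : P.constPath f ≫ pullback.fst f (P.src B) = 𝟙 A :=
  pullback.lift_fst _ _ _

lemma constPath_snd : P.constPath f ≫ pullback.snd f (P.src B) = f ≫ P.const B :=
  pullback.lift_snd _ _ _

lemma gap_fst : P.gap f ≫ pullback.fst f (P.src B) = P.src A :=
  pullback.lift_fst _ _ _

lemma gap_snd : P.gap f ≫ pullback.snd f (P.src B) = P.path.map f :=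
  pullback.lift_snd _ _ _

lemma constPath_endpoint : P.constPath f ≫ P.endpoint f = f := by
  rw [endpoint, ← Category.assoc, constPath_snd, Category.assoc, P.const_tgt, Category.comp_id]

end MappingPath

/-- `i : A ⟶ B` is the inclusion of a strong deformation retract: it has a retraction `r`, and a
homotopy from `r ≫ i` to the identity which is constant on `A`. -/
def IsStrongDeformationRetract (i : A ⟶ B) : Prop :=
  ∃ (r : B ⟶ A) (η : B ⟶ P.path.obj B),
    i ≫ r = 𝟙 A ∧ η ≫ P.src B = r ≫ i ∧ η ≫ P.tgt B = 𝟙 B ∧ i ≫ η = i ≫ P.const B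

lemma isStrongDeformationRetract_of_hasLiftingProperty (i : A ⟶ B) [HasPullback i (P.src B)]
    [HasLiftingProperty i (P.endpoint i)] : P.IsStrongDeformationRetract i := by
  have sq : CommSq (P.constPath i) i (P.endpoint i) (𝟙 B) :=
    ⟨by rw [constPath_endpoint, Category.comp_id]⟩
  refine ⟨sq.lift ≫ pullback.fst i (P.src B), sq.lift ≫ pullback.snd i (P.src B), ?_, ?_, ?_, ?_⟩
  · rw [← Category.assoc, sq.fac_left, constPath_fst]
  · rw [Category.assoc, Category.assoc, pullback.condition]
  · rw [Category.assoc]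
    exact sq.fac_right
  · rw [← Category.assoc, sq.fac_left, constPath_snd]

variable {P} in
/-- For a square with top `a` and bottom `b`, the homotopy joins `r ≫ a ≫ q` to `b`; lifting it to
a homotopy starting at `r ≫ a` gives the diagonal as the other end. -/
lemma IsStrongDeformationRetract.hasLiftingProperty {i : A ⟶ B}
    (hi : P.IsStrongDeformationRetract i) (q : E ⟶ X) [HasPullback q (P.src X)]
    [HasLiftingProperty i (P.gap q)] : HasLiftingProperty i q where
  sq_hasLift {a b} sq := by
    obtain ⟨r, η, hr, hsrc, htgt, hconst⟩ := hi
    have compat : (r ≫ a) ≫ q = (η ≫ P.path.map b) ≫ P.src X := by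
      rw [Category.assoc, sq.w, Category.assoc, P.src_naturality, ← Category.assoc, ← hsrc,
        Category.assoc]
    have homotopySq : CommSq (a ≫ P.const E) i (P.gap q)
        (pullback.lift (r ≫ a) (η ≫ P.path.map b) compat) := ⟨by
      apply pullback.hom_ext
      · rw [Category.assoc, Category.assoc, Category.assoc, gap_fst, P.const_src,
          pullback.lift_fst, ← Category.assoc i, hr, Category.comp_id, Category.id_comp]
      · rw [Category.assoc, Category.assoc, Category.assoc, gap_snd, pullback.lift_snd,
          ← P.const_naturality, ← Category.assoc a, sq.w, ← Category.assoc i, hconst,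
          Category.assoc, Category.assoc, P.const_naturality]⟩
    refine ⟨⟨⟨homotopySq.lift ≫ P.tgt E, ?_, ?_⟩⟩⟩
    · rw [← Category.assoc, homotopySq.fac_left, Category.assoc, P.const_tgt, Category.comp_id]
    · rw [Category.assoc, ← P.tgt_naturality, ← P.gap_snd q, Category.assoc,
        ← Category.assoc homotopySq.lift, homotopySq.fac_right, ← Category.assoc,
        pullback.lift_snd, Category.assoc, P.tgt_naturality, ← Category.assoc, htgt,
        Category.id_comp]

end FunctorialPathObject

lemma IsRetractOf.nonempty_retractArrow {X Y Z W : M} {f : X ⟶ Y} {g : Z ⟶ W}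
    (h : IsRetractOf f g) : Nonempty (RetractArrow f g) := by
  obtain ⟨iX, rX, iY, rY, hX, hY, hi, hr⟩ := h
  exact ⟨{ i := Arrow.homMk iX iY hi, r := Arrow.homMk rX rY hr.symm }⟩

lemma stableUnderRetracts_of_isStableUnderRetracts (P : MorphismProperty M)
    [P.IsStableUnderRetracts] : StableUnderRetracts P := by
  intro X Y Z W f g hfg hg
  obtain ⟨h⟩ := hfg.nonempty_retractArrow
  exact P.of_retract h hg

lemma llp_inf_eq (W Fib : MorphismProperty M) :
    (W ⊓ Fib).llp = fun _ _ i ↦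
      ∀ ⦃E X : M⦄ (p : E ⟶ X), W p → Fib p → HasLiftingProperty i p :=
  funext₃ fun _ _ _ ↦ propext (forall₃_congr fun _ _ _ ↦ and_imp)

/-- Quillen's path object argument. -/
theorem FunctorialPathObject.isModelStructure (P : FunctorialPathObject M)
    {W Fib : MorphismProperty M} [W.HasTwoOutOfThreeProperty] [W.ContainsIdentities]
    [W.IsStableUnderRetracts] [Fib.IsStableUnderRetracts] [Fib.IsStableUnderComposition]
    [HasFactorization (W ⊓ Fib).llp (W ⊓ Fib)]
    [∀ {A B : M} (f : A ⟶ B), HasPullback f (P.src B)]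
    (fst_mem : ∀ {A B : M} (f : A ⟶ B), W (pullback.fst f (P.src B)))
    (endpoint_mem : ∀ {A B : M} (f : A ⟶ B), Fib (P.endpoint f))
    (gap_mem : ∀ {E X : M} (q : E ⟶ X), Fib q → (W ⊓ Fib) (P.gap q)) :
    IsModelStructure W Fib (W ⊓ Fib).llp := by
  have constPath_mem {A B : M} (f : A ⟶ B) : W (P.constPath f) :=
    W.of_postcomp _ _ (fst_mem f) (by rw [P.constPath_fst]; exact W.id_mem _)
  exact
  { comp_mem _ _ _ := W.comp_mem
    of_postcomp _ _ _ := W.of_postcomp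
    of_precomp _ _ _ := W.of_precomp
    weq_retract := stableUnderRetracts_of_isStableUnderRetracts W
    fib_retract := stableUnderRetracts_of_isStableUnderRetracts Fib
    cof_retract := stableUnderRetracts_of_isStableUnderRetracts _
    lift_cof_trivFib _ _ _ _ _ p hi hp hw := hi p ⟨hw, hp⟩
    lift_trivCof_fib _ _ _ _ i p hi hw hp := by
      have : W (P.endpoint i) :=
        W.of_precomp _ _ (constPath_mem i) (by rwa [P.constPath_endpoint])
      have := hi _ ⟨this, endpoint_mem i⟩
      have := hi _ (gap_mem p hp)
      exact (P.isStrongDeformationRetract_of_hasLiftingProperty i).hasLiftingProperty p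
    fact_cof_trivFib _ _ f :=
      let φ := factorizationData (W ⊓ Fib).llp (W ⊓ Fib) f
      ⟨φ.Z, φ.i, φ.p, φ.hi, φ.hp.2, φ.hp.1, φ.fac⟩
    fact_trivCof_fib _ _ f := by
      let φ := factorizationData (W ⊓ Fib).llp (W ⊓ Fib) (P.constPath f)
      have hi : W φ.i := W.of_postcomp _ _ φ.hp.1 (by rw [φ.fac]; exact constPath_mem f)
      refine ⟨φ.Z, φ.i, φ.p ≫ P.endpoint f, φ.hi, hi, Fib.comp_mem _ _ φ.hp.2 (endpoint_mem f), ?_⟩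
      rw [φ.fac_assoc, P.constPath_endpoint] }

end PathObjects

lemma isEquivalence_of_retract {X Y X' Y' : Type*} [Category X] [Category Y] [Category X']
    [Category Y'] {F : X ⥤ Y} {G : X' ⥤ Y'} {iX : X ⥤ X'} {rX : X' ⥤ X} {iY : Y ⥤ Y'}
    {rY : Y' ⥤ Y} (hX : iX ⋙ rX = 𝟭 X) (hY : iY ⋙ rY = 𝟭 Y) (hi : iX ⋙ G = F ⋙ iY)
    (hr : G ⋙ rY = rX ⋙ F) [G.IsEquivalence] : F.IsEquivalence :=
  have unit : 𝟭 X ≅ F ⋙ iY ⋙ G.inv ⋙ rX :=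
    eqToIso hX.symm ≪≫
      Functor.isoWhiskerLeft iX (Functor.isoWhiskerRight G.asEquivalence.unitIso rX) ≪≫
      Functor.isoWhiskerRight (eqToIso hi) (G.inv ⋙ rX)
  have counit : (iY ⋙ G.inv ⋙ rX) ⋙ F ≅ 𝟭 Y :=
    Functor.isoWhiskerLeft (iY ⋙ G.inv) (eqToIso hr.symm) ≪≫
      Functor.isoWhiskerLeft iY (Functor.isoWhiskerRight G.asEquivalence.counitIso rY) ≪≫
      eqToIso hY
  Functor.IsEquivalence.mk' _ unit counit

section Groupoids

variable {X Y Z X' Y' : Type*} [Groupoid X] [Groupoid Y] [Groupoid Z] [Groupoid X'] [Groupoid Y']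

namespace IsIsofibration

lemma iff_exists_arrow (F : X ⥤ Y) :
    IsIsofibration F ↔ ∀ (a : X) (δ : Arrow Y), F.obj a = δ.left →
      ∃ ε : Arrow X, ε.left = a ∧ F.mapArrow.obj ε = δ := by
  constructor
  · rintro hF a ⟨_, y, g⟩ (rfl : F.obj a = _)
    obtain ⟨b, e, rfl, he⟩ := hF a y (asIso g)
    refine ⟨Arrow.mk e.hom, rfl, congrArg Arrow.mk (by simpa using he)⟩
  · intro hF a y g
    obtain ⟨⟨_, b, e⟩, rfl, h⟩ := hF a (Arrow.mk g.hom) rfl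
    obtain ⟨hb, hg⟩ := (Arrow.mk_eq_mk_iff _ _).1 h |>.2
    exact ⟨b, asIso e, hb, by simpa using hg⟩

lemma comp {F : X ⥤ Y} {G : Y ⥤ Z} (hF : IsIsofibration F) (hG : IsIsofibration G) :
    IsIsofibration (F ⋙ G) := by
  rw [iff_exists_arrow] at hF hG ⊢
  intro a δ hδ
  obtain ⟨ε, hε, rfl⟩ := hG (F.obj a) δ hδ
  obtain ⟨ζ, hζ, rfl⟩ := hF a ε hε.symm
  exact ⟨ζ, hζ, rfl⟩

lemma of_retract {F : X ⥤ Y} {G : X' ⥤ Y'} {iX : X ⥤ X'} {rX : X' ⥤ X} {iY : Y ⥤ Y'}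
    {rY : Y' ⥤ Y} (hX : iX ⋙ rX = 𝟭 X) (hY : iY ⋙ rY = 𝟭 Y) (hi : iX ⋙ G = F ⋙ iY)
    (hr : G ⋙ rY = rX ⋙ F) (hG : IsIsofibration G) : IsIsofibration F := by
  rw [iff_exists_arrow] at hG ⊢
  intro a δ hδ
  obtain ⟨ε, hε, hεδ⟩ := hG (iX.obj a) (iY.mapArrow.obj δ)
    ((Functor.congr_obj hi a).trans (congrArg iY.obj hδ))
  refine ⟨rX.mapArrow.obj ε, ?_, ?_⟩
  · exact (congrArg rX.obj hε).trans (Functor.congr_obj hX a)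
  · calc F.mapArrow.obj (rX.mapArrow.obj ε)
      _ = (rX ⋙ F).mapArrow.obj ε := rfl
      _ = rY.mapArrow.obj (G.mapArrow.obj ε) := by rw [← hr]; rfl
      _ = (iY ⋙ rY).mapArrow.obj δ := by rw [hεδ]; rfl
      _ = δ := by rw [hY]; rfl

lemma of_full_of_surjective (F : X ⥤ Y) [F.Full] (hF : Function.Surjective F.obj) :
    IsIsofibration F := by
  intro a y g
  obtain ⟨b, rfl⟩ := hF y
  exact ⟨b, asIso (F.preimage g.hom), rfl, by simp⟩

lemma surjective_obj {F : X ⥤ Y} [F.EssSurj] (hF : IsIsofibration F) :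
    Function.Surjective F.obj := fun y ↦
  let ⟨b, _, hb, _⟩ := hF _ y (F.objObjPreimageIso y)
  ⟨b, hb⟩

end IsIsofibration

lemma isEquivalence_and_isIsofibration_iff (F : X ⥤ Y) :
    F.IsEquivalence ∧ IsIsofibration F ↔
      (F.Full ∧ F.Faithful) ∧ Function.Surjective F.obj := by
  constructor
  · rintro ⟨_, hF⟩
    exact ⟨⟨inferInstance, inferInstance⟩, hF.surjective_obj⟩
  · rintro ⟨⟨_, _⟩, hF⟩
    have : F.EssSurj := Functor.essSurj_of_surj hF
    exact ⟨{ }, .of_full_of_surjective F hF⟩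

end Groupoids

section FunctorCategory

variable {M D : Type*} [Category M] [Category D] (W : MorphismProperty M)

instance [W.ContainsIdentities] : (W.functorCategory D).ContainsIdentities where
  id_mem _ _ := W.id_mem _

instance [W.IsStableUnderComposition] : (W.functorCategory D).IsStableUnderComposition where
  comp_mem _ _ hf hg d := W.comp_mem _ _ (hf d) (hg d)

instance [W.HasTwoOutOfThreeProperty] : (W.functorCategory D).HasTwoOutOfThreeProperty where
  of_postcomp _ _ hg hfg d := W.of_postcomp _ _ (hg d) (hfg d)
  of_precomp _ _ hf hfg d := W.of_precomp _ _ (hf d) (hfg d)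

end FunctorCategory

namespace GroupoidPresheaf

/-- The equivalences of groupoids. -/
def equivalences : MorphismProperty Grpd.{v, w} := fun X Y (F : X ⥤ Y) ↦ F.IsEquivalence

/-- The isofibrations of groupoids. -/
def isofibrations : MorphismProperty Grpd.{v, w} := fun X Y (F : X ⥤ Y) ↦ IsIsofibration F

/-- The fully faithful functors between groupoids. -/
def fullyFaithful : MorphismProperty Grpd.{v, w} := fun X Y (F : X ⥤ Y) ↦ F.Full ∧ F.Faithful

instance : equivalences.{v, w}.ContainsIdentities where
  id_mem X := Functor.isEquivalence_refl (C := X)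

instance : equivalences.{v, w}.HasTwoOutOfThreeProperty where
  comp_mem {X Y Z} F G (_ : F.IsEquivalence) (_ : G.IsEquivalence) :=
    Functor.isEquivalence_trans (C := X) (D := Y) (E := Z) F G
  of_postcomp {X Y Z} F G (_ : G.IsEquivalence) (_ : Functor.IsEquivalence (F ⋙ G)) :=
    Functor.isEquivalence_of_comp_right (C := X) (D := Y) (E := Z) F G
  of_precomp {X Y Z} F G (_ : F.IsEquivalence) (_ : Functor.IsEquivalence (F ⋙ G)) :=
    Functor.isEquivalence_of_comp_left (C := X) (D := Y) (E := Z) F G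

instance : equivalences.{v, w}.IsStableUnderRetracts where
  of_retract h (_ : Functor.IsEquivalence _) :=
    isEquivalence_of_retract h.left.retract h.right.retract h.i_w h.r_w.symm

instance : isofibrations.{v, w}.IsStableUnderComposition where
  comp_mem _ _ hF hG := IsIsofibration.comp hF hG

instance : isofibrations.{v, w}.IsStableUnderRetracts where
  of_retract h hG := IsIsofibration.of_retract h.left.retract h.right.retract h.i_w h.r_w.symm hG

end GroupoidPresheaf

section FullyFaithful

variable {X Y Z : Type*} [Category X] [Category Y] [Category Z]

lemma functor_eq_of_comp_faithful_eq {F G : X ⥤ Y} (ψ : Y ⥤ Z) [ψ.Faithful]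
    (hobj : ∀ x, F.obj x = G.obj x) (h : F ⋙ ψ = G ⋙ ψ) : F = G := by
  refine CategoryTheory.Functor.ext hobj fun a b f ↦ ψ.map_injective ?_
  simpa [eqToHom_map] using Functor.congr_hom h f

lemma exists_functor_comp_fullyFaithful_eq (ψ : Y ⥤ Z) [ψ.Full] [ψ.Faithful] (k : X ⥤ Z)
    (σ : X → Y) (hσ : ∀ x, ψ.obj (σ x) = k.obj x) :
    ∃ t : X ⥤ Y, t ⋙ ψ = k ∧ ∀ x, t.obj x = σ x := by
  let t : X ⥤ Y :=
    { obj := σ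
      map {a b} f := ψ.preimage (eqToHom (hσ a) ≫ k.map f ≫ eqToHom (hσ b).symm)
      map_id a := ψ.map_injective (by simp)
      map_comp f g := ψ.map_injective (by simp) }
  exact ⟨t, CategoryTheory.Functor.ext hσ (by simp [t]), fun _ ↦ rfl⟩

end FullyFaithful

namespace GroupoidPresheaf

section Objects

variable {D : Type*} [Category D] {T H K : D ⥤ Grpd.{v, w}}

/-- The presheaf of sets of objects of a presheaf of groupoids. Here and below a presheaf on `C` is
a functor out of `D = Cᵒᵖ`. -/
abbrev objects (D : Type*) [Category D] : (D ⥤ Grpd.{v, w}) ⥤ (D ⥤ Type w) :=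
  (Functor.whiskeringRight D _ _).obj Grpd.objects

lemma hom_eq_of_objects_map_eq {t t' : T ⟶ H} {ψ : H ⟶ K}
    (hψ : ∀ d, Functor.Faithful (C := H.obj d) (D := K.obj d) (ψ.app d))
    (hobj : (objects D).map t = (objects D).map t') (h : t ≫ ψ = t' ≫ ψ) : t = t' := by
  ext d : 2
  exact functor_eq_of_comp_faithful_eq (X := T.obj d) (Y := H.obj d) (Z := K.obj d) (ψ.app d)
    (fun x ↦ congrArg (fun φ ↦ φ.app d x) hobj) (congr_app h d)

lemma exists_hom_of_objects_hom {ψ : H ⟶ K} (hψ : fullyFaithful.functorCategory D ψ) (k : T ⟶ K)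
    (σ : (objects D).obj T ⟶ (objects D).obj H)
    (hσ : σ ≫ (objects D).map ψ = (objects D).map k) :
    ∃ t : T ⟶ H, t ≫ ψ = k ∧ (objects D).map t = σ := by
  have component (d : D) : ∃ t : T.obj d ⟶ H.obj d, t ≫ ψ.app d = k.app d ∧
      ∀ x : T.obj d, t.obj x = σ.app d x := by
    obtain ⟨_, _⟩ := hψ d
    exact exists_functor_comp_fullyFaithful_eq (X := T.obj d) (Y := H.obj d) (Z := K.obj d)
      (ψ.app d) (k.app d) (fun x ↦ σ.app d x) fun x ↦ congrArg (fun φ ↦ φ.app d x) hσ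
  choose t ht hobj using component
  refine ⟨{ app := t, naturality := fun c d f ↦ ?_ }, ?_, ?_⟩
  · have := (hψ d).2
    refine functor_eq_of_comp_faithful_eq (X := T.obj c) (Y := H.obj d) (Z := K.obj d) (ψ.app d)
      (fun x ↦ ?_) ?_
    · have hσ' : σ.app d ((T.map f).obj x) = (H.map f).obj (σ.app c x) :=
        NatTrans.naturality_apply σ f x
      exact (hobj d _).trans (hσ'.trans (congrArg (H.map f).obj (hobj c x).symm))
    · change (T.map f ≫ t d) ≫ ψ.app d = (t c ≫ H.map f) ≫ ψ.app d
      rw [Category.assoc, ht, k.naturality, ← ht, Category.assoc, Category.assoc, ψ.naturality]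
  · ext d : 2
    exact ht d
  · ext d x
    exact hobj d x

lemma hasLiftingProperty_of_objects {A B : D ⥤ Grpd.{v, w}} (i : A ⟶ B) {ψ : H ⟶ K}
    (hψ : fullyFaithful.functorCategory D ψ)
    [HasLiftingProperty ((objects D).map i) ((objects D).map ψ)] : HasLiftingProperty i ψ where
  sq_hasLift {a b} sq := by
    obtain ⟨t, ht, hobj⟩ := exists_hom_of_objects_hom hψ b (sq.map (objects D)).lift
      (sq.map (objects D)).fac_right
    refine ⟨⟨⟨t, ?_, ht⟩⟩⟩
    apply hom_eq_of_objects_map_eq (fun d ↦ (hψ d).2)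
    · rw [Functor.map_comp, hobj, CommSq.fac_left]
    · rw [Category.assoc, ht, sq.w]

lemma exists_fullyFaithful_lift {G : D ⥤ Grpd.{v, w}} {S : D ⥤ Type w}
    (π : S ⟶ (objects D).obj G) :
    ∃ (Z : D ⥤ Grpd.{v, w}) (ψ : Z ⟶ G) (e : (objects D).obj Z ≅ S),
      fullyFaithful.functorCategory D ψ ∧ e.hom ≫ π = (objects D).map ψ := by
  let π₀ (d : D) : S.obj d → G.obj d := π.app d
  let Z₀ (d : D) : Grpd.{v, w} := Grpd.of (InducedCategory (G.obj d) (π₀ d))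
  let proj (d : D) : Z₀ d ⥤ G.obj d := inducedFunctor (π₀ d)
  have (d : D) : (proj d).Full := InducedCategory.full (π₀ d)
  have (d : D) : (proj d).Faithful := InducedCategory.faithful (π₀ d)
  have restriction {c d : D} (f : c ⟶ d) :
      ∃ t : Z₀ c ⥤ Z₀ d, t ⋙ proj d = proj c ⋙ G.map f ∧ ∀ s : S.obj c, t.obj s = S.map f s :=
    exists_functor_comp_fullyFaithful_eq (X := Z₀ c) (Y := Z₀ d) (Z := G.obj d) (proj d)
      (proj c ⋙ G.map f) (S.map f) fun s ↦ NatTrans.naturality_apply π f s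
  choose r hr hobj using @restriction
  let Z : D ⥤ Grpd.{v, w} :=
    { obj := Z₀
      map f := r f
      map_id d := functor_eq_of_comp_faithful_eq (proj d)
        (fun s ↦ (hobj (𝟙 d) s).trans (S.map_id_apply d s)) (by rw [hr, G.map_id]; rfl)
      map_comp {b c d} f g := functor_eq_of_comp_faithful_eq (F := r (f ≫ g)) (G := r f ⋙ r g)
        (proj d)
        (fun s ↦ (hobj _ _).trans ((S.map_comp_apply f g s).trans
          ((congrArg (S.map g) (hobj f s)).symm.trans (hobj g _).symm)))
        (by rw [hr, Functor.assoc, hr, G.map_comp, ← Functor.assoc, hr]; rfl) }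
  refine ⟨Z, { app := proj, naturality _ _ f := hr f },
    NatIso.ofComponents (fun d ↦ Iso.refl _) ?_, ?_, ?_⟩
  · intro c d f
    ext s
    exact hobj f s
  · exact fun d ↦ ⟨inferInstanceAs (Functor.Full (proj d)),
      inferInstanceAs (Functor.Faithful (proj d))⟩
  · rfl

end Objects

instance : fullyFaithful.{v, w}.IsStableUnderComposition where
  comp_mem {X Y Z} F G := fun ⟨_, _⟩ ⟨_, _⟩ ↦
    ⟨Functor.Full.comp (C := X) (D := Y) (E := Z) F G,
      Functor.Faithful.comp (C := X) (D := Y) (E := Z) F G⟩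

lemma equivalences_le_fullyFaithful : equivalences.{v, w} ≤ fullyFaithful :=
  fun _ _ _ h ↦ ⟨h.full, h.faithful⟩

section Pullbacks

variable {D : Type*} [Category D] {Z T H K : D ⥤ Grpd.{v, w}}

lemma isPullback_of_objects {p : Z ⟶ T} {q : Z ⟶ H} {k : T ⟶ K} {ψ : H ⟶ K}
    (comm : p ≫ k = q ≫ ψ) (hp : fullyFaithful.functorCategory D p)
    (hψ : ∀ d, Functor.Faithful (C := H.obj d) (D := K.obj d) (ψ.app d))
    (hobj : IsPullback ((objects D).map p) ((objects D).map q) ((objects D).map k)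
      ((objects D).map ψ)) :
    IsPullback p q k ψ := by
  have lift (s : PullbackCone k ψ) : ∃ t : s.pt ⟶ Z, t ≫ p = s.fst ∧ t ≫ q = s.snd := by
    obtain ⟨t, ht, htobj⟩ := exists_hom_of_objects_hom hp s.fst
      (hobj.lift ((objects D).map s.fst) ((objects D).map s.snd)
        (by rw [← Functor.map_comp, s.condition, Functor.map_comp])) (hobj.lift_fst _ _ _)
    refine ⟨t, ht, hom_eq_of_objects_map_eq hψ ?_ ?_⟩
    · rw [Functor.map_comp, htobj, hobj.lift_snd]
    · rw [Category.assoc, ← comm, ← Category.assoc, ht, s.condition]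
  choose l hfst hsnd using lift
  refine ⟨⟨comm⟩, ⟨PullbackCone.IsLimit.mk _ l hfst hsnd fun s m hm₁ hm₂ ↦ ?_⟩⟩
  refine hom_eq_of_objects_map_eq (fun d ↦ (hp d).2) (hobj.hom_ext ?_ ?_) (by rw [hm₁, hfst])
  · rw [← Functor.map_comp, ← Functor.map_comp, hm₁, hfst]
  · rw [← Functor.map_comp, ← Functor.map_comp, hm₂, hsnd]

lemma exists_isPullback_of_fullyFaithful (k : T ⟶ K) {ψ : H ⟶ K}
    (hψ : fullyFaithful.functorCategory D ψ) :
    ∃ (Z : D ⥤ Grpd.{v, w}) (p : Z ⟶ T) (q : Z ⟶ H),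
      fullyFaithful.functorCategory D p ∧ IsPullback p q k ψ ∧
      IsPullback ((objects D).map p) ((objects D).map q) ((objects D).map k)
        ((objects D).map ψ) := by
  obtain ⟨Z, p, e, hp, he⟩ :=
    exists_fullyFaithful_lift (pullback.fst ((objects D).map k) ((objects D).map ψ))
  obtain ⟨q, hq, hqobj⟩ := exists_hom_of_objects_hom hψ (p ≫ k)
    (e.hom ≫ pullback.snd ((objects D).map k) ((objects D).map ψ)) (by
      rw [Category.assoc, ← pullback.condition, ← Category.assoc, he, Functor.map_comp])
  have hobj : IsPullback ((objects D).map p) ((objects D).map q) ((objects D).map k)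
      ((objects D).map ψ) :=
    .of_iso_pullback ⟨by rw [← Functor.map_comp, ← Functor.map_comp, hq]⟩ e he hqobj.symm
  exact ⟨Z, p, q, hp, isPullback_of_objects hq.symm hp (fun d ↦ (hψ d).2) hobj, hobj⟩

lemma hasPullback_of_fullyFaithful (k : T ⟶ K) {ψ : H ⟶ K}
    (hψ : fullyFaithful.functorCategory D ψ) : HasPullback k ψ :=
  have ⟨_, _, _, _, h, _⟩ := exists_isPullback_of_fullyFaithful k hψ
  h.hasPullback

instance : (fullyFaithful.{v, w}.functorCategory D).IsStableUnderBaseChange where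
  of_isPullback {_ _ _ _ k ψ q p} h hψ := by
    obtain ⟨_, p₀, _, hp₀, h₀, _⟩ := exists_isPullback_of_fullyFaithful k hψ
    rw [← h.flip.isoIsPullback_hom_fst _ _ h₀]
    refine MorphismProperty.comp_mem _ _ _ (fun d ↦ equivalences_le_fullyFaithful _ ?_) hp₀
    exact (equivalences.functorCategory D).of_isIso _ d

lemma isPullback_objects_map {p : Z ⟶ T} {q : Z ⟶ H} {k : T ⟶ K} {ψ : H ⟶ K}
    (h : IsPullback p q k ψ) (hψ : fullyFaithful.functorCategory D ψ) :
    IsPullback ((objects D).map p) ((objects D).map q) ((objects D).map k)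
      ((objects D).map ψ) := by
  obtain ⟨Z₀, p₀, q₀, _, h₀, hobj₀⟩ := exists_isPullback_of_fullyFaithful k hψ
  refine hobj₀.of_iso ((objects D).mapIso (h₀.isoIsPullback _ _ h)) (Iso.refl _) (Iso.refl _)
    (Iso.refl _) ?_ ?_ (by simp) (by simp)
  · rw [Functor.mapIso_hom, ← Functor.map_comp, h₀.isoIsPullback_hom_fst, Iso.refl_hom,
      Category.comp_id]
  · rw [Functor.mapIso_hom, ← Functor.map_comp, h₀.isoIsPullback_hom_snd, Iso.refl_hom,
      Category.comp_id]

end Pullbacks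

end GroupoidPresheaf

section Projectives

lemma hasLiftingProperty_coprod_inl_of_projective {M : Type*} [Category M] (A : M) (P : M)
    [Projective P] [HasBinaryCoproduct A P] {X Y : M} (p : X ⟶ Y) [Epi p] :
    HasLiftingProperty (coprod.inl : A ⟶ A ⨿ P) p where
  sq_hasLift {a b} sq := ⟨⟨
    { l := coprod.desc a (Projective.factorThru (coprod.inr ≫ b) p)
      fac_left := coprod.inl_desc _ _
      fac_right := coprod.hom_ext
        (by rw [← Category.assoc, coprod.inl_desc, sq.w])
        (by rw [← Category.assoc, coprod.inr_desc, Projective.factorThru_comp]) }⟩⟩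

instance {M : Type*} [Category M] [EnoughProjectives M] [HasBinaryCoproducts M] :
    HasFactorization (epimorphisms M).llp (epimorphisms M) where
  nonempty_mapFactorizationData {A B} f := ⟨
    { Z := A ⨿ Projective.over B
      i := coprod.inl
      p := coprod.desc f (Projective.π B)
      fac := coprod.inl_desc _ _
      hi _ _ p (_ : Epi p) := hasLiftingProperty_coprod_inl_of_projective A _ p
      hp := epi_of_epi_fac (coprod.inr_desc f (Projective.π B)) }⟩

variable {D : Type u} [Category.{u} D]

instance (d : Dᵒᵖ) : Projective (coyoneda.obj d) where
  factors {E X} f p _ := by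
    have surj : Function.Surjective (p.app d.unop) := (epi_iff_surjective _).1 inferInstance
    obtain ⟨x, hx⟩ := surj (coyonedaEquiv f)
    refine ⟨coyonedaEquiv.symm x, coyonedaEquiv.injective ?_⟩
    rw [coyonedaEquiv_comp, Equiv.apply_symm_apply, hx]

instance : EnoughProjectives (D ⥤ Type u) where
  presentation X := ⟨
    { p := ∐ fun x : X.Elements ↦ coyoneda.obj (.op x.1)
      f := Sigma.desc fun x ↦ coyonedaEquiv.symm x.2
      epi := by
        refine (NatTrans.epi_iff_epi_app _).2 fun d ↦ (epi_iff_surjective _).2 fun x ↦ ?_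
        let x' : X.Elements := ⟨d, x⟩
        refine ⟨(Sigma.ι (fun x : X.Elements ↦ coyoneda.obj (.op x.1)) x').app d (𝟙 d), ?_⟩
        have h := Sigma.ι_desc (fun x : X.Elements ↦ coyonedaEquiv.symm x.2) x'
        exact (congrArg coyonedaEquiv h).trans (coyonedaEquiv.apply_symm_apply x) }⟩

end Projectives

/-- A functorial path object of `M`, applied objectwise to functors into `M`. -/
def FunctorialPathObject.functorCategory {M : Type*} [Category M] (P : FunctorialPathObject M)
    (D : Type*) [Category D] : FunctorialPathObject (D ⥤ M) where
  path := (Functor.whiskeringRight D M M).obj P.path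
  src F := { app d := P.src (F.obj d), naturality _ _ _ := P.src_naturality _ }
  tgt F := { app d := P.tgt (F.obj d), naturality _ _ _ := P.tgt_naturality _ }
  const F := { app d := P.const (F.obj d), naturality _ _ _ := P.const_naturality _ }
  src_naturality φ := by ext d; exact P.src_naturality (φ.app d)
  tgt_naturality φ := by ext d; exact P.tgt_naturality (φ.app d)
  const_naturality φ := by ext d; exact P.const_naturality (φ.app d)
  const_src F := by ext d; exact P.const_src (F.obj d)
  const_tgt F := by ext d; exact P.const_tgt (F.obj d)

section Arrows

variable {X Y : Type*} [Category X] [Category Y]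

lemma exists_arrow_of_full (ψ : X ⥤ Y) [ψ.Full] {a b : X} {δ : Arrow Y}
    (ha : ψ.obj a = δ.left) (hb : ψ.obj b = δ.right) :
    ∃ m : a ⟶ b, ψ.mapArrow.obj (Arrow.mk m) = δ := by
  obtain ⟨_, _, g⟩ := δ
  subst ha hb
  exact ⟨ψ.preimage g, congrArg Arrow.mk (ψ.map_preimage g)⟩

lemma arrow_mk_right_eq_of_left_eq_id {γ ε : Arrow Y} [Epi γ.hom] {z : Y} {δ : γ.right ⟶ z}
    (hε : ε = Arrow.mk (γ.hom ≫ δ)) (φ : γ ⟶ ε) (hφ : Arrow.mk φ.left = Arrow.mk (𝟙 γ.left)) :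
    Arrow.mk φ.right = Arrow.mk δ := by
  subst hε
  have hleft : φ.left = 𝟙 γ.left := Arrow.mk_injective _ _ hφ
  have hright : φ.right = δ := by
    rw [← cancel_epi γ.hom, ← Arrow.w φ, hleft]
    exact Category.id_comp _
  rw [hright]

end Arrows

section ArrowGroupoid

variable {X : Type*} [Groupoid X]

noncomputable instance : Groupoid (Arrow X) :=
  Groupoid.ofIsIso fun φ ↦ Arrow.isIso_of_isIso_left_of_isIso_right φ

instance : (Arrow.leftFunc : Arrow X ⥤ X).Full where
  map_surjective {γ δ} f := ⟨Arrow.homMk f (inv γ.hom ≫ f ≫ δ.hom), rfl⟩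

instance : (Arrow.leftFunc : Arrow X ⥤ X).Faithful where
  map_injective {γ δ φ φ'} (h : φ.left = φ'.left) := by
    ext
    · exact h
    · rw [← cancel_epi γ.hom, ← Arrow.w φ, ← Arrow.w φ', h]

end ArrowGroupoid

namespace GroupoidPresheaf

/-- The path object of a groupoid is its groupoid of arrows; the constant path at `x` is `𝟙 x`. -/
noncomputable def arrowPathObject : FunctorialPathObject Grpd.{u, u} where
  path :=
    { obj X := Grpd.of (Arrow X)
      map {X Y} F := Functor.mapArrow (C := X) (D := Y) F }
  src X := (Arrow.leftFunc : Arrow X ⥤ X)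
  tgt X := (Arrow.rightFunc : Arrow X ⥤ X)
  const X := ({ obj x := Arrow.mk (𝟙 x), map f := Arrow.homMk f f (by simp) } : X ⥤ Arrow X)
  src_naturality _ := rfl
  tgt_naturality _ := rfl
  const_naturality {X Y} F := functor_eq_of_comp_faithful_eq (X := X) (Y := Arrow Y) (Z := Y)
    Arrow.leftFunc
    (fun x ↦ congrArg Arrow.mk (CategoryTheory.Functor.map_id (C := X) (D := Y) F x).symm) rfl
  const_src _ := rfl
  const_tgt _ := rfl

section TrivialFibrations

variable {D : Type*} [Category D]

lemma equivalences_inf_isofibrations_iff {H K : D ⥤ Grpd.{v, w}} (ψ : H ⟶ K) :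
    (equivalences.functorCategory D ⊓ isofibrations.functorCategory D) ψ ↔
      fullyFaithful.functorCategory D ψ ∧ Epi ((objects D).map ψ) := by
  have epi_iff : Epi ((objects D).map ψ) ↔ ∀ d, Function.Surjective (ψ.app d).obj :=
    (NatTrans.epi_iff_epi_app _).trans (forall_congr' fun _ ↦ epi_iff_surjective _)
  rw [epi_iff]
  exact forall_and.symm.trans <| (forall_congr' fun d ↦ isEquivalence_and_isIsofibration_iff
    (X := H.obj d) (Y := K.obj d) (ψ.app d)).trans forall_and

instance [HasFactorization (epimorphisms (D ⥤ Type w)).llp (epimorphisms (D ⥤ Type w))] :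
    HasFactorization
      (equivalences.{v, w}.functorCategory D ⊓ isofibrations.functorCategory D).llp
      (equivalences.functorCategory D ⊓ isofibrations.functorCategory D) where
  nonempty_mapFactorizationData {F G} f := by
    let φ := factorizationData (epimorphisms (D ⥤ Type w)).llp (epimorphisms (D ⥤ Type w))
      ((objects D).map f)
    obtain ⟨Z, p, e, hp, he⟩ := exists_fullyFaithful_lift φ.p
    obtain ⟨i, hip, hi⟩ := exists_hom_of_objects_hom hp f (φ.i ≫ e.inv)
      (by rw [← he, Category.assoc, e.inv_hom_id_assoc, φ.fac])
    have hp_epi : Epi ((objects D).map p) := by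
      rw [← he]
      have : Epi φ.p := φ.hp
      infer_instance
    have hi_llp : (epimorphisms (D ⥤ Type w)).llp ((objects D).map i) := by
      rw [hi]
      exact (MorphismProperty.cancel_right_of_respectsIso _ φ.i e.inv).2 φ.hi
    refine ⟨{ Z, i, p, fac := hip, hi := fun H K ψ hψ ↦ ?_, hp := ?_ }⟩
    · obtain ⟨hψ, hψ_epi⟩ := (equivalences_inf_isofibrations_iff ψ).1 hψ
      have := hi_llp _ hψ_epi
      exact hasLiftingProperty_of_objects i hψ
    · exact (equivalences_inf_isofibrations_iff p).2 ⟨hp, hp_epi⟩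

end TrivialFibrations

section ArrowPaths

variable {D : Type*} [Category D]

/-- The path object of a presheaf of groupoids. -/
noncomputable abbrev pathObject (D : Type*) [Category D] :
    FunctorialPathObject (D ⥤ Grpd.{u, u}) :=
  arrowPathObject.functorCategory D

variable {F G : D ⥤ Grpd.{u, u}}

lemma fullyFaithful_src (G : D ⥤ Grpd.{u, u}) :
    fullyFaithful.functorCategory D ((pathObject D).src G) := fun d ↦
  ⟨inferInstanceAs (Arrow.leftFunc : Arrow (G.obj d) ⥤ G.obj d).Full,
    inferInstanceAs (Arrow.leftFunc : Arrow (G.obj d) ⥤ G.obj d).Faithful⟩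

instance (f : F ⟶ G) : HasPullback f ((pathObject D).src G) :=
  hasPullback_of_fullyFaithful f (fullyFaithful_src G)

lemma fullyFaithful_mappingPath_fst (f : F ⟶ G) :
    fullyFaithful.functorCategory D (pullback.fst f ((pathObject D).src G)) :=
  MorphismProperty.pullback_fst _ _ (fullyFaithful_src G)

lemma equivalences_mappingPath_fst (f : F ⟶ G) :
    equivalences.functorCategory D (pullback.fst f ((pathObject D).src G)) := by
  refine ((equivalences_inf_isofibrations_iff _).2 ⟨fullyFaithful_mappingPath_fst f, ?_⟩).1
  refine epi_of_epi_fac (f := (objects D).map ((pathObject D).constPath f)) (h := 𝟙 _) ?_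
  rw [← Functor.map_comp, FunctorialPathObject.constPath_fst, CategoryTheory.Functor.map_id]

/-- The starting point of a point of the mapping path object, as a functor at each stage. -/
noncomputable abbrev mappingPathFst (f : F ⟶ G) (d : D) :
    ((pathObject D).mappingPath f).obj d ⥤ F.obj d :=
  (pullback.fst f ((pathObject D).src G)).app d

/-- The path of a point of the mapping path object, as a functor at each stage. -/
noncomputable abbrev mappingPathSnd (f : F ⟶ G) (d : D) :
    ((pathObject D).mappingPath f).obj d ⥤ Arrow (G.obj d) :=
  (pullback.snd f ((pathObject D).src G)).app d

lemma mappingPathFst_comp (f : F ⟶ G) (d : D) :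
    mappingPathFst f d ⋙ f.app d = mappingPathSnd f d ⋙ Arrow.leftFunc :=
  congr_app (pullback.condition (f := f) (g := (pathObject D).src G)) d

lemma isPullback_mappingPath_objects (f : F ⟶ G) (d : D) :
    IsPullback (((objects D).map (pullback.fst f ((pathObject D).src G))).app d)
      (((objects D).map (pullback.snd f ((pathObject D).src G))).app d)
      (((objects D).map f).app d) (((objects D).map ((pathObject D).src G)).app d) :=
  (isPullback_objects_map (.of_hasPullback _ _) (fullyFaithful_src G)).map
    ((evaluation D (Type u)).obj d)

lemma mappingPath_ext (f : F ⟶ G) {d : D} {a b : ((pathObject D).mappingPath f).obj d}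
    (hfst : (mappingPathFst f d).obj a = (mappingPathFst f d).obj b)
    (hsnd : (mappingPathSnd f d).obj a = (mappingPathSnd f d).obj b) : a = b :=
  Types.ext_of_isPullback (isPullback_mappingPath_objects f d) hfst hsnd

lemma exists_mappingPath (f : F ⟶ G) {d : D} (x : F.obj d) (γ : Arrow (G.obj d))
    (h : (f.app d).obj x = γ.left) :
    ∃ b, (mappingPathFst f d).obj b = x ∧ (mappingPathSnd f d).obj b = γ :=
  Types.exists_of_isPullback (isPullback_mappingPath_objects f d) x γ h

lemma fullyFaithful_gap (q : F ⟶ G) :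
    fullyFaithful.functorCategory D ((pathObject D).gap q) := by
  intro d
  obtain ⟨_, _⟩ := fullyFaithful_mappingPath_fst q d
  obtain ⟨_, _⟩ := fullyFaithful_src F d
  have e : (((pathObject D).gap q).app d ⋙ (pullback.fst q ((pathObject D).src G)).app d) ≅
      ((pathObject D).src F).app d := eqToIso (congr_app ((pathObject D).gap_fst q) d)
  exact ⟨.of_comp_faithful_iso e, .of_comp_iso e⟩

lemma epi_objects_map_gap {q : F ⟶ G} (hq : isofibrations.functorCategory D q) :
    Epi ((objects D).map ((pathObject D).gap q)) := by
  refine (NatTrans.epi_iff_epi_app _).2 fun d ↦ (epi_iff_surjective _).2 fun a ↦ ?_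
  obtain ⟨ε, hε, hεq⟩ := (IsIsofibration.iff_exists_arrow _).1 (hq d) _ _
    (Functor.congr_obj (mappingPathFst_comp q d) a)
  refine ⟨ε, mappingPath_ext q ?_ ?_⟩
  · exact (Functor.congr_obj (congr_app ((pathObject D).gap_fst q) d) ε).trans hε
  · exact (Functor.congr_obj (congr_app ((pathObject D).gap_snd q) d) ε).trans hεq

lemma isofibrations_endpoint (f : F ⟶ G) :
    isofibrations.functorCategory D ((pathObject D).endpoint f) := by
  intro d
  refine (IsIsofibration.iff_exists_arrow _).2 fun a δ hδ ↦ ?_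
  let fst := mappingPathFst f d
  let snd := mappingPathSnd f d
  have comm : fst ⋙ f.app d = snd ⋙ Arrow.leftFunc := mappingPathFst_comp f d
  have : fst.Full := (fullyFaithful_mappingPath_fst f d).1
  obtain ⟨_, z, δ⟩ := δ
  obtain rfl : (snd.obj a).right = _ := hδ
  have source : (f.app d).obj (fst.obj a) = (snd.obj a).left := Functor.congr_obj comm a
  obtain ⟨b, hb, hbγ⟩ :=
    exists_mappingPath f (fst.obj a) (Arrow.mk ((snd.obj a).hom ≫ δ)) source
  obtain ⟨m, hm⟩ := exists_arrow_of_full fst (δ := Arrow.mk (𝟙 (fst.obj a))) rfl hb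
  refine ⟨Arrow.mk m, rfl, arrow_mk_right_eq_of_left_eq_id hbγ (snd.map m) ?_⟩
  calc Arrow.leftFunc.mapArrow.obj (snd.mapArrow.obj (Arrow.mk m))
    _ = (Functor.mapArrow (C := F.obj d) (D := G.obj d) (f.app d)).obj
        (fst.mapArrow.obj (Arrow.mk m)) :=
      congrArg (fun K : _ ⥤ G.obj d ↦ K.mapArrow.obj (Arrow.mk m)) comm.symm
    _ = Arrow.mk (𝟙 ((f.app d).obj (fst.obj a))) := by
      rw [hm]
      exact congrArg Arrow.mk
        (CategoryTheory.Functor.map_id (C := F.obj d) (D := G.obj d) (f.app d) _)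
    _ = Arrow.mk (𝟙 (snd.obj a).left) := congrArg (fun y ↦ Arrow.mk (𝟙 y)) source

end ArrowPaths

theorem isModelStructure (D : Type u) [Category.{u} D] :
    IsModelStructure (equivalences.{u, u}.functorCategory D) (isofibrations.functorCategory D)
      (equivalences.functorCategory D ⊓ isofibrations.functorCategory D).llp :=
  (pathObject D).isModelStructure equivalences_mappingPath_fst isofibrations_endpoint
    fun q hq ↦ (equivalences_inf_isofibrations_iff _).2
      ⟨fullyFaithful_gap q, epi_objects_map_gap hq⟩

end GroupoidPresheaf

/-- The objectwise model structure on the category of presheaves of groupoids on a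
small category `C`: weak equivalences (resp. fibrations) are the maps which are
objectwise equivalences of groupoids (resp. objectwise isofibrations), and cofibrations
are the maps having the left lifting property with respect to the maps which are both
weak equivalences and fibrations. -/
theorem presheaves_of_groupoids_model_structure (C : Type u) [Category.{u} C] :
    IsModelStructure (M := Cᵒᵖ ⥤ Grpd.{u, u})
      (fun F G (φ : NatTrans F G) => ∀ X : Cᵒᵖ, Functor.IsEquivalence (φ.app X : _ ⥤ _))
      (fun F G (φ : NatTrans F G) => ∀ X : Cᵒᵖ, IsIsofibration (φ.app X : _ ⥤ _))
      (fun F G (φ : NatTrans F G) => ∀ ⦃H K : Cᵒᵖ ⥤ Grpd.{u, u}⦄ (ψ : H ⟶ K),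
        (∀ X : Cᵒᵖ, Functor.IsEquivalence (ψ.app X : _ ⥤ _)) →
        (∀ X : Cᵒᵖ, IsIsofibration (ψ.app X : _ ⥤ _)) →
        HasLiftingProperty φ ψ) := by
  have h := GroupoidPresheaf.isModelStructure Cᵒᵖ
  rwa [llp_inf_eq] at h
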